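/- Let A be a commutative semiring and ⋀ the exterior semialgebra over A. For every r ≥ 1 and every partition λ with at most r parts, the Schubert derivations σ̄_-(z) and σ̄_+(w) commute against x^0 in the following sense, coefficientwise in the powers of z^{−1} and w: (σ̄_-(z)(σ̄_+(w)[x]^r_λ)) ∧ x^0 = (σ̄_+(w)(σ̄_-(z)[x]^r_λ)) ∧ x^0. -/

import Mathlib

/-!  The exterior semialgebra over a commutative semiring `A`, following
Chapman–Gatto–Rowen.  It is the free `A`-module on the basis consisting of a
unit symbol `1` (here `none`) together with all pairs `(ε, s)` where
`ε ∈ {+1, −1}` (here a `Bool`, `true = +1`) and `s` is a strictly decreasing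
nonempty tuple of natural numbers (here a nonempty `Finset ℕ`, read in
decreasing order).  -/

namespace ExtSemi

/-- The basis: `none` is the unit `1`; `some (ε, s)` is the sign `ε` times the
strictly decreasing wedge monomial on the nonempty finite set `s`. -/
abbrev XB : Type := Option (Bool × {s : Finset ℕ // s.Nonempty})

variable (A : Type*) [CommSemiring A]

/-- The exterior semialgebra `⋀`: the free `A`-module on `XB`. -/
abbrev Ext : Type _ := XB →₀ A

/-- Sign flip on the basis; the unit is fixed. -/
def negB : XB → XB
  | none => none
  | some (ε, s) => some (!ε, s)

/-- The negation map `(−)` on `⋀`: the `A`-linear map sending `(ε, s)` to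
`(−ε, s)` and fixing `1`. -/
noncomputable def neg : Ext A →ₗ[A] Ext A := Finsupp.lmapDomain A A negB

/-- The signed basis element attached to a sign and a finite set; the empty set
gives the unit (on which the negation acts trivially). -/
noncomputable def bElem (ε : Bool) (t : Finset ℕ) : Ext A :=
  if h : t.Nonempty then Finsupp.single (some (ε, ⟨t, h⟩)) 1 else Finsupp.single none 1

/-- The unit `1` of `⋀`. -/
noncomputable def one : Ext A := Finsupp.single (none : XB) 1

/-- The generator `x^i`. -/
noncomputable def xg (i : ℕ) : Ext A := bElem A true {i}

/-- `true` iff merging the decreasing enumerations of the disjoint sets `s`, `t`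
(concatenated as `s ++ t`) into a single decreasing enumeration is an even
permutation, i.e. iff the number of pairs `(a ∈ s, b ∈ t)` with `a < b` is even. -/
def mergeEven (s t : Finset ℕ) : Bool :=
  decide ((∑ a ∈ s, (t.filter (fun b => a < b)).card) % 2 = 0)

/-- Wedge product of two basis elements: concatenate the tuples and multiply the
signs (`0` if the tuples share an entry). -/
noncomputable def wB : XB → XB → Ext A
  | none, c => Finsupp.single c 1
  | some b, none => Finsupp.single (some b) 1
  | some (ε, s), some (δ, t) =>
      if s.1 ∩ t.1 = ∅ then bElem A ((ε == δ) == mergeEven s.1 t.1) (s.1 ∪ t.1) else 0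

/-- The wedge product on `⋀`, extended `A`-bilinearly from the basis. -/
noncomputable def wedge (u v : Ext A) : Ext A :=
  u.sum fun b a => v.sum fun c a' => (a * a') • wB A b c

/-- Extend a map defined on the basis `A`-linearly to all of `⋀`. -/
noncomputable def ext1 (g : XB → Ext A) (u : Ext A) : Ext A := u.sum fun b a => a • g b

/-- Quasi-zeros: elements of the form `w + (−)w`. -/
def IsQuasiZero (q : Ext A) : Prop := ∃ w : Ext A, q = w + neg A w

/-- The surpassing relation: `u ⪯ v` iff `v = u + q` for some quasi-zero `q`. -/
def Prec (u v : Ext A) : Prop := ∃ q : Ext A, IsQuasiZero A q ∧ v = u + q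

/-- Twist an element by a sign. -/
noncomputable def twist (ε : Bool) (u : Ext A) : Ext A := if ε then u else neg A u

/-- `k`-fold application of the negation map. -/
noncomputable def negpow (k : ℕ) (u : Ext A) : Ext A := if k % 2 = 0 then u else neg A u

/-- Wedge product of a list of elements of `⋀`. -/
noncomputable def wedgeL (l : List (Ext A)) : Ext A := l.foldr (wedge A) (one A)

/-- The wedge monomial `x^{j_1} ∧ ⋯ ∧ x^{j_r}` for an arbitrary tuple. -/
noncomputable def wedgeMon (l : List ℕ) : Ext A := wedgeL A (l.map (xg A))

/-- The decreasing enumeration of a finite set of naturals. -/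
def descList (s : Finset ℕ) : List ℕ := (s.sort (· ≤ ·)).reverse

/-- The contraction `∂^j ⌟` on basis elements:
`∂^j ⌟ (x^{i_1} ∧ ⋯ ∧ x^{i_r}) = Σ_k (−)^{k−1}[i_k = j]·x^{i_1} ∧ ⋯ ∧ x^{i_{k-1}} ∧ x^{i_{k+1}} ∧ ⋯ ∧ x^{i_r}`,
`∂^j ⌟ 1 = 0`; it commutes with the negation map. -/
noncomputable def contraB (j : ℕ) : XB → Ext A
  | none => 0
  | some (ε, s) =>
      if j ∈ s.1 then
        twist A ε (negpow A ((s.1.filter (fun b => j < b)).card) (bElem A true (s.1.erase j)))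
      else 0

/-- The contraction `∂^j ⌟` on `⋀`, extended `A`-linearly. -/
noncomputable def contra (j : ℕ) (u : Ext A) : Ext A := ext1 A (contraB A j) u

/-- Make an `A`-linear operator on `⋀` commuting with the negation map out of a
coefficient family on decreasing lists (`F k l` = the `k`-th coefficient on the
monomial with decreasing tuple `l`); the unit is sent to itself in degree `0`. -/
noncomputable def hsOn (F : ℕ → List ℕ → Ext A) (k : ℕ) : XB → Ext A
  | none => if k = 0 then one A else 0
  | some (ε, s) => twist A ε (F k (descList s.1))

open Finset.Nat in
/-- Coefficient of `z^k` in `σ₊(z)` on a monomial: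
`σ_k (x^{i_1} ∧ ⋯ ∧ x^{i_r}) = Σ_{k_1+⋯+k_r=k} x^{i_1+k_1} ∧ ⋯ ∧ x^{i_r+k_r}`. -/
noncomputable def sigPlusL (k : ℕ) (l : List ℕ) : Ext A :=
  ∑ c ∈ antidiagonalTuple l.length k,
    wedgeMon A (List.ofFn fun i : Fin l.length => l.get i + c i)

/-- Coefficient of `z^k` in the Schubert derivation `σ₊(z)`. -/
noncomputable def sigPlus (k : ℕ) : Ext A → Ext A := ext1 A (hsOn A (sigPlusL A) k)

open Finset.Nat in
/-- Coefficient of `w^{−k}` in `σ₋(w)`, where `σ₋(w) x^j = Σ_{k=0}^{j} x^{j−k} w^{−k}`. -/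
noncomputable def sigMinusL (k : ℕ) (l : List ℕ) : Ext A :=
  ∑ c ∈ antidiagonalTuple l.length k,
    if ∀ i, c i ≤ l.get i then
      wedgeMon A (List.ofFn fun i : Fin l.length => l.get i - c i)
    else 0

/-- Coefficient of `w^{−k}` in the Schubert derivation `σ₋(w)`. -/
noncomputable def sigMinus (k : ℕ) : Ext A → Ext A := ext1 A (hsOn A (sigMinusL A) k)

open Finset.Nat in
/-- Coefficient of `z^{−k}` in `σ̄₋(z)`, where `σ̄₋(z) x^j = x^j + ((−)x^{j−1}) z^{−1}`
(`x^{−1} := 0`). -/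
noncomputable def sbarMinusL (k : ℕ) (l : List ℕ) : Ext A :=
  negpow A k (∑ c ∈ antidiagonalTuple l.length k,
    if ∀ i, c i ≤ 1 ∧ c i ≤ l.get i then
      wedgeMon A (List.ofFn fun i : Fin l.length => l.get i - c i)
    else 0)

/-- Coefficient of `z^{−k}` in the Schubert derivation `σ̄₋(z)`. -/
noncomputable def sbarMinus (k : ℕ) : Ext A → Ext A := ext1 A (hsOn A (sbarMinusL A) k)

open Finset.Nat in
/-- Coefficient of `w^k` in `σ̄₊(w)`, where `σ̄₊(w) x^j = x^j + ((−)x^{j+1}) w`. -/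
noncomputable def sbarPlusL (k : ℕ) (l : List ℕ) : Ext A :=
  negpow A k (∑ c ∈ antidiagonalTuple l.length k,
    if ∀ i, c i ≤ 1 then
      wedgeMon A (List.ofFn fun i : Fin l.length => l.get i + c i)
    else 0)

/-- Coefficient of `w^k` in the Schubert derivation `σ̄₊(w)`. -/
noncomputable def sbarPlus (k : ℕ) : Ext A → Ext A := ext1 A (hsOn A (sbarPlusL A) k)

/-- The basis element `[x]^r_λ = x^{r−1+λ_1} ∧ x^{r−2+λ_2} ∧ ⋯ ∧ x^{λ_r}`
attached to a partition `λ` with at most `r` parts. -/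
noncomputable def xlam (r : ℕ) (lam : Fin r → ℕ) : Ext A :=
  wedgeMon A (List.ofFn fun i : Fin r => (r - 1 - (i : ℕ)) + lam i)

end ExtSemi

/-!
The signs take no part. Every term of the two sides has its entries moved `d + e` times, so it
carries the sign `(−)^(d+e)`; and moving the entries of a strictly decreasing tuple by at most one
leaves it weakly decreasing, so a nonzero term needs no sorting. Hence on a monomial both sides
count, for each strictly decreasing tuple without the entry `0`, the ways of reaching it, and
these two counts may be compared in a classical exterior algebra over a commutative ring. There
`σ̄₊` and `σ̄₋` come from the linear maps `x^j ↦ x^j + w x^(j+1)` and `x^j ↦ x^j + z x^(j-1)`,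
which commute modulo `x^0`.
-/

namespace ExtSemi

open Finset Function Finset.Nat

section Shifts

variable {ι : Type*} [DecidableEq ι]

/-- The exponent tuple of a term of `σ̄₊` on the monomial with exponents `v`: the entries at the
positions in `s` go up by one. -/
def raise (s : Finset ι) (v : ι → ℕ) : ι → ℕ := s.piecewise (fun i => v i + 1) v

/-- The exponent tuple of a term of `σ̄₋` on the monomial with exponents `v`: the entries at the
positions in `t` go down by one. The subtraction is truncated, so this is only meaningful when
these entries are positive. -/
def lower (t : Finset ι) (v : ι → ℕ) : ι → ℕ := t.piecewise (fun i => v i - 1) v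

theorem antitone_raise [PartialOrder ι] {v : ι → ℕ} (hv : StrictAnti v) (s : Finset ι) :
    Antitone (raise s v) := by
  intro i j hij
  rcases hij.eq_or_lt with rfl | hlt
  · rfl
  · have := hv hlt
    simp only [raise, Finset.piecewise]
    split_ifs <;> omega

theorem antitone_lower [PartialOrder ι] {v : ι → ℕ} (hv : StrictAnti v) (t : Finset ι) :
    Antitone (lower t v) := by
  intro i j hij
  rcases hij.eq_or_lt with rfl | hlt
  · rfl
  · have := hv hlt
    simp only [lower, Finset.piecewise]
    split_ifs <;> omega

variable [Fintype ι]

/-- The sets of positions where `v` can be raised with nonzero wedge monomial as the result. -/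
def raisings (v : ι → ℕ) : Finset (Finset ι) := {s | Injective (raise s v)}

/-- The sets of positions where `v` can be lowered with nonzero wedge monomial as the result. -/
def lowerings (v : ι → ℕ) : Finset (Finset ι) :=
  {t | (∀ i ∈ t, 1 ≤ v i) ∧ Injective (lower t v)}

theorem mem_raisings {s : Finset ι} {v : ι → ℕ} : s ∈ raisings v ↔ Injective (raise s v) :=
  mem_filter_univ s

theorem mem_lowerings {t : Finset ι} {v : ι → ℕ} :
    t ∈ lowerings v ↔ (∀ i ∈ t, 1 ≤ v i) ∧ Injective (lower t v) :=
  mem_filter_univ t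

theorem strictAnti_raise [PartialOrder ι] {v : ι → ℕ} (hv : StrictAnti v) {s : Finset ι}
    (hs : s ∈ raisings v) : StrictAnti (raise s v) :=
  (antitone_raise hv s).strictAnti_of_injective (mem_raisings.1 hs)

theorem strictAnti_lower [PartialOrder ι] {v : ι → ℕ} (hv : StrictAnti v) {t : Finset ι}
    (ht : t ∈ lowerings v) : StrictAnti (lower t v) :=
  (antitone_lower hv t).strictAnti_of_injective (mem_lowerings.1 ht).2

end Shifts

section AlternatingExpansion

variable {ι : Type*} [DecidableEq ι] [Fintype ι]
variable {R V N : Type*} [CommSemiring R] [AddCommMonoid V] [Module R V] [AddCommMonoid N]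
  [Module R N]

theorem multilinearMap_add_smul (f : MultilinearMap R (fun _ : ι => V) N) (m m' : ι → V) (c : R) :
    f (fun i => m i + c • m' i) = ∑ s : Finset ι, c ^ #s • f (s.piecewise m' m) := by
  have hterm (s : Finset ι) : f (s.piecewise (c • m') m) = c ^ #s • f (s.piecewise m' m) := by
    rw [← prod_const, ← f.map_piecewise_smul]
    congr 1
    ext i
    by_cases hi : i ∈ s <;> simp [hi]
  simp only [← hterm, ← f.map_add_univ]
  congr 1
  ext i
  simp [add_comm]

/-- The sequence `j ↦ b (j - 1)`, with the paper's convention that `b (-1) = 0`. -/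
def delay {E : Type*} [Zero E] (b : ℕ → E) : ℕ → E
  | 0 => 0
  | j + 1 => b j

theorem alternatingMap_raise (f : V [⋀^ι]→ₗ[R] N) (b : ℕ → V) (w : R) (v : ι → ℕ) :
    f (fun i => b (v i) + w • b (v i + 1)) = ∑ s ∈ raisings v, w ^ #s • f (b ∘ raise s v) := by
  have hpiecewise (s : Finset ι) :
      s.piecewise (fun i => b (v i + 1)) (fun i => b (v i)) = b ∘ raise s v := by
    ext i
    by_cases hi : i ∈ s <;> simp [raise, hi]
  have hexpand := multilinearMap_add_smul f.toMultilinearMap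
    (fun i => b (v i)) (fun i => b (v i + 1)) w
  simp only [AlternatingMap.coe_multilinearMap, hpiecewise] at hexpand
  rw [hexpand]
  refine (sum_subset (subset_univ _) fun s _ hs => ?_).symm
  rw [f.map_eq_zero_of_not_injective _ fun h => hs (mem_raisings.2 h.of_comp), smul_zero]

theorem alternatingMap_lower (f : V [⋀^ι]→ₗ[R] N) (b : ℕ → V) (z : R) (v : ι → ℕ) :
    f (fun i => b (v i) + z • delay b (v i)) =
      ∑ t ∈ lowerings v, z ^ #t • f (b ∘ lower t v) := by
  have hpiecewise {t : Finset ι} (ht : ∀ i ∈ t, 1 ≤ v i) :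
      t.piecewise (fun i => delay b (v i)) (fun i => b (v i)) = b ∘ lower t v := by
    ext i
    by_cases hi : i ∈ t
    · obtain ⟨k, hk⟩ := Nat.exists_eq_add_of_le' (ht i hi)
      simp [lower, hi, hk, delay]
    · simp [lower, hi]
  have hexpand := multilinearMap_add_smul f.toMultilinearMap
    (fun i => b (v i)) (fun i => delay b (v i)) z
  simp only [AlternatingMap.coe_multilinearMap] at hexpand
  rw [hexpand]
  refine (sum_congr_of_eq_on_inter ?_ ?_ ?_).symm
  · simp
  · intro t _ ht
    by_cases hpos : ∀ i ∈ t, 1 ≤ v i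
    · have hinj : ¬ Injective (lower t v) := fun h => ht (mem_lowerings.2 ⟨hpos, h⟩)
      rw [hpiecewise hpos, f.map_eq_zero_of_not_injective _ fun h => hinj h.of_comp, smul_zero]
    · push Not at hpos
      obtain ⟨i, hi, hvi⟩ := hpos
      rw [f.map_coord_zero i, smul_zero]
      simp [hi, Nat.lt_one_iff.1 hvi, delay]
  · intro t ht _
    rw [hpiecewise (mem_lowerings.1 ht).1]

end AlternatingExpansion

section Minor

variable {ι : Type*} [DecidableEq ι] [Fintype ι] {R : Type*} [CommRing R]

/-- The coefficient of `x^{μ_1} ∧ ⋯ ∧ x^{μ_r}`, as an alternating form on sequences: the minor on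
the columns `μ` of the matrix whose rows are the given sequences. -/
noncomputable def minor (μ : ι → ℕ) : (ℕ → R) [⋀^ι]→ₗ[R] R :=
  Matrix.detRowAlternating.compLinearMap (LinearMap.funLeft R R μ)

theorem minor_congr {μ : ι → ℕ} {u u' : ι → ℕ → R} (h : ∀ i j, u i (μ j) = u' i (μ j)) :
    minor μ u = minor μ u' := by
  simp only [minor, AlternatingMap.compLinearMap_apply]
  congr 1
  ext i j
  exact h i j

theorem minor_single [LinearOrder ι] {ν μ : ι → ℕ} (hν : StrictAnti ν) (hμ : StrictAnti μ) :
    minor μ ((fun j => Pi.single j (1 : R)) ∘ ν) = if ν = μ then 1 else 0 := by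
  change Matrix.det (Matrix.of fun i j => (Pi.single (ν i) 1 : ℕ → R) (μ j)) = _
  split_ifs with h
  · subst h
    have hone : (Matrix.of fun i j => (Pi.single (ν i) 1 : ℕ → R) (ν j)) = 1 := by
      ext i j
      simp [Pi.single_apply, Matrix.one_apply, hν.injective.eq_iff, eq_comm]
    rw [hone, Matrix.det_one]
  · obtain ⟨i, hi⟩ : ∃ i, ν i ∉ Set.range μ := by
      by_contra! hsub
      refine h ((hν.range_inj hμ).1 (Set.eq_of_subset_of_ncard_le (Set.range_subset_iff.2 hsub) ?_))
      rw [Set.ncard_range_of_injective hν.injective, Set.ncard_range_of_injective hμ.injective]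
    refine Matrix.det_eq_zero_of_row_eq_zero i fun j => ?_
    exact Pi.single_eq_of_ne (fun hj => hi ⟨j, hj⟩) _

end Minor

section Counting

theorem sum_comp_eq_of_card_fiber_eq {α β γ E : Type*} [DecidableEq γ] [AddCommMonoid E]
    {S : Finset α} {T : Finset β} {g : α → γ} {h : β → γ} {f : γ → E}
    (hcard : ∀ c, f c ≠ 0 → #{a ∈ S | g a = c} = #{b ∈ T | h b = c}) :
    ∑ a ∈ S, f (g a) = ∑ b ∈ T, f (h b) := by
  have hg (a) (ha : a ∈ S) : g a ∈ S.image g ∪ T.image h :=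
    mem_union_left _ (mem_image_of_mem g ha)
  have hh (b) (hb : b ∈ T) : h b ∈ S.image g ∪ T.image h :=
    mem_union_right _ (mem_image_of_mem h hb)
  rw [← sum_fiberwise_of_maps_to' hg, ← sum_fiberwise_of_maps_to' hh]
  refine sum_congr rfl fun c _ => ?_
  rw [sum_const, sum_const]
  by_cases hc : f c = 0
  · rw [hc, smul_zero, smul_zero]
  · rw [hcard c hc]

variable {ι : Type*} [DecidableEq ι] [Fintype ι] [LinearOrder ι]

/- On `x^j` the two composites of `x^j ↦ x^j + w x^{j+1}` and `x^j ↦ x^j + z x^{j-1}` differ by a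
multiple of `x^0` (and only for `j = 0`), which no minor on positive columns sees. -/
theorem sum_raise_lower_weights {R : Type*} [CommRing R] (w z : R) {v μ : ι → ℕ}
    (hv : StrictAnti v) (hμ : StrictAnti μ) (hpos : ∀ i, μ i ≠ 0) :
    ∑ s ∈ raisings v, w ^ #s * ∑ t ∈ lowerings (raise s v),
        z ^ #t * (if lower t (raise s v) = μ then 1 else 0) =
      ∑ t ∈ lowerings v, z ^ #t * ∑ s ∈ raisings (lower t v),
        w ^ #s * (if raise s (lower t v) = μ then 1 else 0) := by
  let x : ℕ → ℕ → R := fun j => Pi.single j 1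
  let up : ℕ → ℕ → R := fun j => x j + w • x (j + 1)
  let down : ℕ → ℕ → R := fun j => x j + z • delay x j
  have expand_down {ν : ι → ℕ} (hν : StrictAnti ν) : minor μ (down ∘ ν) =
      ∑ t ∈ lowerings ν, z ^ #t * (if lower t ν = μ then 1 else 0) := by
    refine (alternatingMap_lower (minor μ) x z ν).trans (sum_congr rfl fun t ht => ?_)
    rw [minor_single (strictAnti_lower hν ht) hμ, smul_eq_mul]
  have expand_up {ν : ι → ℕ} (hν : StrictAnti ν) : minor μ (up ∘ ν) =
      ∑ s ∈ raisings ν, w ^ #s * (if raise s ν = μ then 1 else 0) := by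
    refine (alternatingMap_raise (minor μ) x w ν).trans (sum_congr rfl fun s hs => ?_)
    rw [minor_single (strictAnti_raise hν hs) hμ, smul_eq_mul]
  calc
    _ = ∑ s ∈ raisings v, w ^ #s • minor μ (down ∘ raise s v) :=
      sum_congr rfl fun s hs => by rw [expand_down (strictAnti_raise hv hs), smul_eq_mul]
    _ = minor μ (fun i => down (v i) + w • down (v i + 1)) :=
      (alternatingMap_raise (minor μ) down w v).symm
    _ = minor μ (fun i => up (v i) + z • delay up (v i)) := by
      refine minor_congr fun i j => ?_
      cases hi : v i with
      | zero => simp [up, down, x, delay, Pi.single_eq_of_ne (hpos j)]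
      | succ k =>
        simp only [up, down, delay, Pi.add_apply, Pi.smul_apply, smul_eq_mul]
        ring
    _ = ∑ t ∈ lowerings v, z ^ #t • minor μ (up ∘ lower t v) :=
      alternatingMap_lower (minor μ) up z v
    _ = _ := sum_congr rfl fun t ht => by rw [expand_up (strictAnti_lower hv ht), smul_eq_mul]

open Polynomial in
theorem sum_raise_lower_indicator {v μ : ι → ℕ} (hv : StrictAnti v) (hμ : StrictAnti μ)
    (hpos : ∀ i, μ i ≠ 0) (d e : ℕ) :
    ∑ s ∈ raisings v with #s = e, ∑ t ∈ lowerings (raise s v) with #t = d,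
        (if lower t (raise s v) = μ then 1 else 0 : ℤ) =
      ∑ t ∈ lowerings v with #t = d, ∑ s ∈ raisings (lower t v) with #s = e,
        (if raise s (lower t v) = μ then 1 else 0 : ℤ) := by
  have coeff_term (a b : ℕ) (p : Prop) [Decidable p] :
      ((X ^ a * (C X ^ b * if p then 1 else 0) : ℤ[X][X]).coeff e).coeff d =
        if a = e then if b = d then if p then 1 else 0 else 0 else 0 := by
    by_cases hp : p
    · rw [if_pos hp, mul_one, ← C_pow, coeff_mul_C, coeff_X_pow, ite_mul, one_mul, zero_mul]
      simp only [hp, if_true, eq_comm (b := e), apply_ite (coeff · d), coeff_X_pow, coeff_zero,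
        eq_comm (a := d)]
    · simp [hp]
  have swap (a b : ℕ) (q : ℤ[X][X]) : C X ^ b * (X ^ a * q) = X ^ a * (C X ^ b * q) :=
    mul_left_comm _ _ _
  have hcoeff := congrArg (fun p => (p.coeff e).coeff d)
    (sum_raise_lower_weights (X : ℤ[X][X]) (C X) hv hμ hpos)
  simp only [mul_sum, swap, finsetSum_coeff, coeff_term] at hcoeff
  simp only [sum_filter]
  refine (sum_congr rfl fun s _ => ?_).trans (hcoeff.trans (sum_congr rfl fun t _ => ?_))
  · by_cases h : #s = e <;> simp [h]
  · by_cases h : #t = d <;> simp [h]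

theorem sum_lower_raise_eq_sum_raise_lower {E : Type*} [AddCommMonoid E] {v : ι → ℕ}
    (hv : StrictAnti v) {ψ : (ι → ℕ) → E} (hψ : ∀ κ, StrictAnti κ → (∃ i, κ i = 0) → ψ κ = 0)
    (d e : ℕ) :
    ∑ s ∈ raisings v with #s = e, ∑ t ∈ lowerings (raise s v) with #t = d,
        ψ (lower t (raise s v)) =
      ∑ t ∈ lowerings v with #t = d, ∑ s ∈ raisings (lower t v) with #s = e,
        ψ (raise s (lower t v)) := by
  rw [sum_sigma', sum_sigma']
  refine sum_comp_eq_of_card_fiber_eq (f := ψ)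
    (g := fun p : (_ : Finset ι) × Finset ι => lower p.2 (raise p.1 v))
    (h := fun p : (_ : Finset ι) × Finset ι => raise p.2 (lower p.1 v)) fun κ hκ => ?_
  refine Nat.cast_injective (R := ℤ) ?_
  simp only [natCast_card_filter, sum_sigma]
  by_cases hmono : StrictAnti κ
  · exact sum_raise_lower_indicator hv hmono (fun i hi => hκ (hψ κ hmono ⟨i, hi⟩)) d e
  · have hdown {s t} (hs : s ∈ raisings v) (ht : t ∈ lowerings (raise s v)) :
        lower t (raise s v) ≠ κ :=
      fun h => hmono (h ▸ strictAnti_lower (strictAnti_raise hv hs) ht)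
    have hup {t s} (ht : t ∈ lowerings v) (hs : s ∈ raisings (lower t v)) :
        raise s (lower t v) ≠ κ :=
      fun h => hmono (h ▸ strictAnti_raise (strictAnti_lower hv ht) hs)
    rw [sum_eq_zero fun s hs => sum_eq_zero fun t ht => ?_,
      sum_eq_zero fun t ht => sum_eq_zero fun s hs => ?_]
    · exact if_neg (hup (mem_filter.1 ht).1 (mem_filter.1 hs).1)
    · exact if_neg (hdown (mem_filter.1 hs).1 (mem_filter.1 ht).1)

end Counting

section Antidiagonal

variable {E : Type*} [AddCommMonoid E] {r : ℕ}

theorem sum_antidiagonalTuple_le_one (F : (Fin r → ℕ) → E) (k : ℕ) :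
    ∑ c ∈ antidiagonalTuple r k, (if ∀ i, c i ≤ 1 then F c else 0) =
      ∑ s : Finset (Fin r) with #s = k, F fun i => if i ∈ s then 1 else 0 := by
  have hcard (s : Finset (Fin r)) : ∑ i, (if i ∈ s then 1 else 0) = #s := by simp
  have hbit {c : Fin r → ℕ} (hc : ∀ i, c i ≤ 1) :
      (fun i => if i ∈ ({i | c i = 1} : Finset (Fin r)) then 1 else 0) = c := by
    ext i
    have := hc i
    simp only [mem_filter_univ]
    split_ifs <;> omega
  rw [← sum_filter]
  refine sum_nbij' (fun c => ({i | c i = 1} : Finset (Fin r)))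
    (fun s i => if i ∈ s then 1 else 0) ?_ ?_ ?_ ?_ ?_
  · intro c hc
    obtain ⟨hsum, hle⟩ := mem_filter.1 hc
    rw [mem_filter_univ, ← hcard, hbit hle, mem_antidiagonalTuple.1 hsum]
  · intro s hs
    rw [mem_filter, mem_antidiagonalTuple, hcard]
    refine ⟨(mem_filter.1 hs).2, fun i => ?_⟩
    dsimp only
    split_ifs <;> simp
  · intro c hc
    exact hbit (mem_filter.1 hc).2
  · intro s _
    ext i
    simp
  · intro c hc
    rw [hbit (mem_filter.1 hc).2]

end Antidiagonal

variable (A : Type*) [CommSemiring A]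

section Negation

theorem neg_single (b : XB) (a : A) :
    neg A (Finsupp.single b a) = Finsupp.single (negB b) a :=
  Finsupp.mapDomain_single

theorem neg_apply_one : neg A (one A) = one A :=
  neg_single A none 1

theorem neg_bElem {s : Finset ℕ} (hs : s.Nonempty) (ε : Bool) :
    neg A (bElem A ε s) = bElem A (!ε) s := by
  simp only [bElem, hs, dif_pos, neg_single, negB]

theorem neg_mul_neg_eq_one : neg A * neg A = 1 := by
  refine Finsupp.lhom_ext fun b a => ?_
  rcases b with _ | ⟨ε, s⟩ <;> simp [neg_single, negB]

theorem negpow_eq_pow (k : ℕ) (u : Ext A) : negpow A k u = (neg A ^ k) u := by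
  obtain ⟨m, rfl | rfl⟩ := k.even_or_odd'
  · simp [negpow, pow_mul, pow_two, neg_mul_neg_eq_one]
  · simp [negpow, pow_succ, pow_mul, neg_mul_neg_eq_one, Nat.add_mod]

end Negation

section Operators

/-- The operator with coefficient family `F`, bundled as an endomorphism of `⋀`; by definition
`sbarPlus` and `sbarMinus` are the cases `F = sbarPlusL` and `F = sbarMinusL`. -/
noncomputable def hsEnd (F : ℕ → List ℕ → Ext A) (k : ℕ) : Module.End A (Ext A) :=
  Finsupp.linearCombination A (hsOn A F k)

theorem commute_hsEnd_neg (F : ℕ → List ℕ → Ext A) (k : ℕ) : Commute (hsEnd A F k) (neg A) := by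
  refine Finsupp.lhom_ext fun b a => ?_
  simp only [Module.End.mul_apply, neg_single, hsEnd, Finsupp.linearCombination_single, map_smul]
  congr 1
  have neg_neg (u : Ext A) : neg A (neg A u) = u := LinearMap.congr_fun (neg_mul_neg_eq_one A) u
  rcases b with _ | ⟨ε, s⟩
  · simp only [negB, hsOn]
    split_ifs <;> simp [neg_apply_one]
  · cases ε <;> simp [negB, hsOn, twist, neg_neg]

theorem hsEnd_neg_pow (F : ℕ → List ℕ → Ext A) (k n : ℕ) (u : Ext A) :
    hsEnd A F k ((neg A ^ n) u) = (neg A ^ n) (hsEnd A F k u) :=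
  LinearMap.congr_fun ((commute_hsEnd_neg A F k).pow_right n) u

/-- Wedging with `v` on the right, bundled as an endomorphism of `⋀`. -/
noncomputable def wedgeRight (v : Ext A) : Module.End A (Ext A) :=
  Finsupp.linearCombination A fun b => v.sum fun c a' => a' • wB A b c

theorem wedgeRight_apply (u v : Ext A) : wedgeRight A v u = wedge A u v := by
  simp only [wedgeRight, Finsupp.linearCombination_apply, Finsupp.smul_sum, smul_smul, wedge]

end Operators

section Monomials

/-- The wedge monomial with exponents `v`. -/
noncomputable def wedgeTuple {r : ℕ} (v : Fin r → ℕ) : Ext A := wedgeMon A (List.ofFn v)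

theorem wedgeTuple_succ {r : ℕ} (v : Fin (r + 1) → ℕ) :
    wedgeTuple A v = wedge A (xg A (v 0)) (wedgeTuple A (Fin.tail v)) := by
  simp only [wedgeTuple, wedgeMon, List.ofFn_succ, List.map_cons]
  rfl

theorem bElem_of_nonempty (ε : Bool) {s : Finset ℕ} (hs : s.Nonempty) :
    bElem A ε s = Finsupp.single (some (ε, ⟨s, hs⟩)) 1 :=
  dif_pos hs

theorem bElem_empty (ε : Bool) : bElem A ε ∅ = one A :=
  dif_neg Finset.not_nonempty_empty

theorem wedge_single_single (b c : XB) :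
    wedge A (Finsupp.single b 1) (Finsupp.single c 1) = wB A b c := by
  simp [wedge]

theorem wedge_bElem_of_not_disjoint {s t : Finset ℕ} (h : ¬ Disjoint s t) (ε δ : Bool) :
    wedge A (bElem A ε s) (bElem A δ t) = 0 := by
  have hne : (s ∩ t).Nonempty := not_disjoint_iff_nonempty_inter.1 h
  rw [bElem_of_nonempty A ε (hne.mono inter_subset_left),
    bElem_of_nonempty A δ (hne.mono inter_subset_right), wedge_single_single]
  exact if_neg hne.ne_empty

theorem wedge_xg_bElem {a : ℕ} {s : Finset ℕ} (h : ∀ x ∈ s, x < a) :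
    wedge A (xg A a) (bElem A true s) = bElem A true (insert a s) := by
  rw [xg, bElem_of_nonempty A _ (singleton_nonempty a)]
  rcases s.eq_empty_or_nonempty with rfl | hs
  · rw [bElem_empty, one, wedge_single_single]
    exact (bElem_of_nonempty A true (singleton_nonempty a)).symm
  · have ha : a ∉ s := fun has => lt_irrefl a (h a has)
    have hlarger : {b ∈ s | a < b} = ∅ := filter_eq_empty_iff.2 fun x hx => (h x hx).le.not_gt
    rw [bElem_of_nonempty A _ hs, wedge_single_single]
    simp [wB, ha, mergeEven, hlarger]

theorem image_univ_succ {r : ℕ} (v : Fin (r + 1) → ℕ) :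
    univ.image v = insert (v 0) (univ.image (Fin.tail v)) := by
  rw [Fin.univ_succ, cons_eq_insert, image_insert, map_eq_image, image_image]
  rfl

theorem wedgeTuple_of_strictAnti {r : ℕ} {v : Fin r → ℕ} (hv : StrictAnti v) :
    wedgeTuple A v = bElem A true (univ.image v) := by
  induction r with
  | zero => rw [univ_eq_empty, image_empty, bElem_empty]; rfl
  | succ r ih =>
    have htail : StrictAnti (Fin.tail v) := fun i j hij => hv (Fin.succ_lt_succ_iff.2 hij)
    rw [wedgeTuple_succ, ih htail, image_univ_succ, wedge_xg_bElem]
    simpa [Fin.tail] using fun i => hv (Fin.succ_pos i)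

theorem wedgeTuple_of_not_injective {r : ℕ} {v : Fin r → ℕ} (hv : Antitone v)
    (hinj : ¬ Injective v) : wedgeTuple A v = 0 := by
  induction r with
  | zero => exact (hinj (injective_of_subsingleton v)).elim
  | succ r ih =>
    have htail : Antitone (Fin.tail v) := fun i j hij => hv (Fin.succ_le_succ_iff.2 hij)
    rw [wedgeTuple_succ]
    by_cases htinj : Injective (Fin.tail v)
    · obtain ⟨i, hi⟩ : v 0 ∈ Set.range (Fin.tail v) := by
        contrapose! hinj
        rw [← Fin.cons_self_tail v]
        exact Fin.cons_injective_iff.2 ⟨hinj, htinj⟩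
      rw [wedgeTuple_of_strictAnti A (htail.strictAnti_of_injective htinj)]
      refine wedge_bElem_of_not_disjoint A ?_ _ _
      simpa using ⟨i, hi⟩
    · rw [ih htail htinj]
      simp [wedge]

theorem exists_neg_pow_wedgeTuple_eq_single (b : XB) :
    ∃ (r : ℕ) (v : Fin r → ℕ) (n : ℕ), StrictAnti v ∧
      (neg A ^ n) (wedgeTuple A v) = Finsupp.single b 1 := by
  rcases b with _ | ⟨ε, s, hs⟩
  · exact ⟨0, Fin.elim0, 0, fun i => i.elim0, rfl⟩
  · let v : Fin #s → ℕ := s.orderEmbOfFin rfl ∘ Fin.rev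
    have hv : StrictAnti v := (s.orderEmbOfFin rfl).strictMono.comp_strictAnti Fin.rev_strictAnti
    have himage : univ.image v = s := by
      rw [← image_image, image_univ_of_surjective Fin.rev_surjective, image_orderEmbOfFin_univ]
    refine ⟨#s, v, if ε then 0 else 1, hv, ?_⟩
    rw [wedgeTuple_of_strictAnti A hv, himage, ← bElem_of_nonempty]
    cases ε
    · simp [neg_bElem A hs]
    · rfl

end Monomials

section SchubertExpansion

theorem descList_image {r : ℕ} {v : Fin r → ℕ} (hv : StrictAnti v) :
    descList (univ.image v) = List.ofFn v := by
  have hsorted : (List.ofFn v).reverse.Pairwise (· < ·) :=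
    List.pairwise_reverse.2 hv.sortedGT_ofFn.pairwise
  have himage : univ.image v = (List.ofFn v).reverse.toFinset := by
    ext
    simp [List.mem_ofFn]
  rw [descList, himage, (List.toFinset_sort (· ≤ ·) (hsorted.imp ne_of_lt)).2
    (hsorted.imp le_of_lt), List.reverse_reverse]

theorem hsEnd_wedgeTuple {F : ℕ → List ℕ → Ext A} {k : ℕ}
    (hF : F k [] = if k = 0 then one A else 0) {r : ℕ} {v : Fin r → ℕ} (hv : StrictAnti v) :
    hsEnd A F k (wedgeTuple A v) = F k (List.ofFn v) := by
  rw [wedgeTuple_of_strictAnti A hv]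
  rcases r with _ | r
  · rw [univ_eq_empty, image_empty, bElem_empty, List.ofFn_zero, hF]
    simp [hsEnd, one, hsOn]
  · rw [bElem_of_nonempty A true (univ_nonempty.image v)]
    simp [hsEnd, hsOn, twist, descList_image hv]

theorem apply_length_get_ofFn {α E : Type*} (P : (n : ℕ) → (Fin n → α) → E) {r : ℕ}
    (v : Fin r → α) : P (List.ofFn v).length (List.ofFn v).get = P r v :=
  congrArg (fun q : (n : ℕ) × (Fin n → α) => P q.1 q.2) (List.equivSigmaTuple.right_inv ⟨r, v⟩)

theorem sbarPlusL_ofFn {r : ℕ} (v : Fin r → ℕ) (k : ℕ) :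
    sbarPlusL A k (List.ofFn v) =
      (neg A ^ k) (∑ s : Finset (Fin r) with #s = k, wedgeTuple A (raise s v)) := by
  have hraise (s : Finset (Fin r)) :
      (fun i => v i + if i ∈ s then 1 else 0) = raise s v := by
    ext i
    by_cases hi : i ∈ s <;> simp [raise, hi]
  rw [sbarPlusL, negpow_eq_pow]
  refine congrArg _ ((apply_length_get_ofFn (fun n u => ∑ c ∈ antidiagonalTuple n k,
    if ∀ i, c i ≤ 1 then wedgeTuple A (fun i => u i + c i) else 0) v).trans ?_)
  simp only [sum_antidiagonalTuple_le_one, hraise]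

theorem sbarMinusL_ofFn {r : ℕ} (v : Fin r → ℕ) (k : ℕ) :
    sbarMinusL A k (List.ofFn v) =
      (neg A ^ k) (∑ t : Finset (Fin r) with #t = k,
        if ∀ i ∈ t, 1 ≤ v i then wedgeTuple A (lower t v) else 0) := by
  have hlower (t : Finset (Fin r)) :
      (fun i => v i - if i ∈ t then 1 else 0) = lower t v := by
    ext i
    by_cases hi : i ∈ t <;> simp [lower, hi]
  have hle (t : Finset (Fin r)) :
      (∀ i, (if i ∈ t then 1 else 0) ≤ v i) ↔ ∀ i ∈ t, 1 ≤ v i :=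
    forall_congr' fun i => by by_cases hi : i ∈ t <;> simp [hi]
  rw [sbarMinusL, negpow_eq_pow]
  refine congrArg _ ((apply_length_get_ofFn (fun n u => ∑ c ∈ antidiagonalTuple n k,
    if ∀ i, c i ≤ 1 ∧ c i ≤ u i then wedgeTuple A (fun i => u i - c i) else 0) v).trans ?_)
  simp only [forall_and, ite_and, sum_antidiagonalTuple_le_one, hlower, hle]

theorem sbarPlus_wedgeTuple {r : ℕ} {v : Fin r → ℕ} (hv : StrictAnti v) (k : ℕ) :
    sbarPlus A k (wedgeTuple A v) =
      (neg A ^ k) (∑ s ∈ raisings v with #s = k, wedgeTuple A (raise s v)) := by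
  have hnil : sbarPlusL A k [] = if k = 0 then one A else 0 := by
    rcases k with _ | k <;> simp [sbarPlusL, negpow_eq_pow, wedgeMon, wedgeL]
  refine (hsEnd_wedgeTuple A hnil hv).trans ((sbarPlusL_ofFn A v k).trans (congrArg _ ?_))
  refine (sum_subset (filter_subset_filter _ (subset_univ _)) fun s hs hs' => ?_).symm
  refine wedgeTuple_of_not_injective A (antitone_raise hv s) fun hinj => hs' ?_
  exact mem_filter.2 ⟨mem_raisings.2 hinj, (mem_filter.1 hs).2⟩

theorem sbarMinus_wedgeTuple {r : ℕ} {v : Fin r → ℕ} (hv : StrictAnti v) (k : ℕ) :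
    sbarMinus A k (wedgeTuple A v) =
      (neg A ^ k) (∑ t ∈ lowerings v with #t = k, wedgeTuple A (lower t v)) := by
  have hnil : sbarMinusL A k [] = if k = 0 then one A else 0 := by
    rcases k with _ | k <;> simp [sbarMinusL, negpow_eq_pow, wedgeMon, wedgeL]
  refine (hsEnd_wedgeTuple A hnil hv).trans ((sbarMinusL_ofFn A v k).trans (congrArg _ ?_))
  refine (sum_congr_of_eq_on_inter ?_ ?_ ?_).symm
  · intro t ht htuniv
    exact (htuniv (mem_filter_univ t |>.2 (mem_filter.1 ht).2)).elim
  · intro t ht ht'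
    refine ite_eq_right_iff.2 fun hpos => ?_
    refine wedgeTuple_of_not_injective A (antitone_lower hv t) fun hinj => ht' ?_
    exact mem_filter.2 ⟨mem_lowerings.2 ⟨hpos, hinj⟩, (mem_filter.1 ht).2⟩
  · intro t ht _
    exact (if_pos (mem_lowerings.1 (mem_filter.1 ht).1).1).symm

theorem sbarMinus_sbarPlus_wedgeTuple {r : ℕ} {v : Fin r → ℕ} (hv : StrictAnti v) (d e : ℕ) :
    sbarMinus A d (sbarPlus A e (wedgeTuple A v)) =
      (neg A ^ (d + e)) (∑ s ∈ raisings v with #s = e,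
        ∑ t ∈ lowerings (raise s v) with #t = d, wedgeTuple A (lower t (raise s v))) := by
  rw [sbarPlus_wedgeTuple A hv]
  change hsEnd A (sbarMinusL A) d _ = _
  rw [hsEnd_neg_pow, map_sum (hsEnd _ _ _), add_comm, pow_add, Module.End.mul_apply,
    map_sum (neg A ^ d)]
  refine congrArg (neg A ^ e) (sum_congr rfl fun s hs => ?_)
  exact sbarMinus_wedgeTuple A (strictAnti_raise hv (mem_filter.1 hs).1) d

theorem sbarPlus_sbarMinus_wedgeTuple {r : ℕ} {v : Fin r → ℕ} (hv : StrictAnti v) (d e : ℕ) :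
    sbarPlus A e (sbarMinus A d (wedgeTuple A v)) =
      (neg A ^ (d + e)) (∑ t ∈ lowerings v with #t = d,
        ∑ s ∈ raisings (lower t v) with #s = e, wedgeTuple A (raise s (lower t v))) := by
  rw [sbarMinus_wedgeTuple A hv]
  change hsEnd A (sbarPlusL A) e _ = _
  rw [hsEnd_neg_pow, map_sum (hsEnd _ _ _), pow_add, Module.End.mul_apply, map_sum (neg A ^ e)]
  refine congrArg (neg A ^ d) (sum_congr rfl fun t ht => ?_)
  exact sbarPlus_wedgeTuple A (strictAnti_lower hv (mem_filter.1 ht).1) e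

end SchubertExpansion

theorem wedge_neg_pow_wedgeTuple_xg_zero {r : ℕ} {v : Fin r → ℕ} (hv : StrictAnti v)
    (hzero : ∃ i, v i = 0) (n : ℕ) : wedge A ((neg A ^ n) (wedgeTuple A v)) (xg A 0) = 0 := by
  have hmem : 0 ∈ univ.image v := by simpa using hzero
  obtain ⟨ε, hε⟩ : ∃ ε, (neg A ^ n) (bElem A true (univ.image v)) = bElem A ε (univ.image v) := by
    induction n with
    | zero => exact ⟨true, rfl⟩
    | succ n ih =>
      obtain ⟨ε, hε⟩ := ih
      exact ⟨!ε, by rw [pow_succ', Module.End.mul_apply, hε, neg_bElem A ⟨0, hmem⟩]⟩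
  rw [wedgeTuple_of_strictAnti A hv, hε]
  refine wedge_bElem_of_not_disjoint A ?_ ε true
  simpa using hzero

theorem sbar_commute_against_x0_wedgeTuple {r : ℕ} {v : Fin r → ℕ} (hv : StrictAnti v)
    (n d e : ℕ) :
    wedge A ((neg A ^ n) (sbarMinus A d (sbarPlus A e (wedgeTuple A v)))) (xg A 0) =
      wedge A ((neg A ^ n) (sbarPlus A e (sbarMinus A d (wedgeTuple A v)))) (xg A 0) := by
  let ψ : (Fin r → ℕ) → Ext A := fun κ =>
    wedgeRight A (xg A 0) ((neg A ^ (n + (d + e))) (wedgeTuple A κ))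
  have hψ (κ) (hκ : StrictAnti κ) (hzero : ∃ i, κ i = 0) : ψ κ = 0 :=
    (wedgeRight_apply A _ _).trans (wedge_neg_pow_wedgeTuple_xg_zero A hκ hzero _)
  have hcount := sum_lower_raise_eq_sum_raise_lower hv hψ d e
  rw [sbarMinus_sbarPlus_wedgeTuple A hv, sbarPlus_sbarMinus_wedgeTuple A hv,
    ← Module.End.mul_apply, ← Module.End.mul_apply, ← pow_add, ← wedgeRight_apply,
    ← wedgeRight_apply]
  simpa only [map_sum] using hcount

theorem sbar_commute_against_x0_general (u : Ext A) (d e : ℕ) :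
    wedge A (sbarMinus A d (sbarPlus A e u)) (xg A 0) =
      wedge A (sbarPlus A e (sbarMinus A d u)) (xg A 0) := by
  have hbasis : wedgeRight A (xg A 0) * (hsEnd A (sbarMinusL A) d * hsEnd A (sbarPlusL A) e) =
      wedgeRight A (xg A 0) * (hsEnd A (sbarPlusL A) e * hsEnd A (sbarMinusL A) d) := by
    refine Finsupp.basisSingleOne.ext fun b => ?_
    obtain ⟨r, v, n, hv, hb⟩ := exists_neg_pow_wedgeTuple_eq_single A b
    simp only [Finsupp.coe_basisSingleOne, ← hb, Module.End.mul_apply, hsEnd_neg_pow,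
      wedgeRight_apply]
    exact sbar_commute_against_x0_wedgeTuple A hv n d e
  rw [← wedgeRight_apply, ← wedgeRight_apply]
  exact LinearMap.congr_fun hbasis u

end ExtSemi

namespace ExtSemi

/-- For every `r ≥ 1` and every partition `λ` with at most `r`
parts, the Schubert derivations `σ̄₋(z)` and `σ̄₊(w)` commute against `x^0`:
`(σ̄₋(z)(σ̄₊(w)[x]^r_λ)) ∧ x^0 = (σ̄₊(w)(σ̄₋(z)[x]^r_λ)) ∧ x^0`,
coefficientwise in the powers `z^{−d}` and `w^e`. -/
theorem sbar_commute_against_x0 (A : Type*) [CommSemiring A]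
    (r : ℕ) (hr : 1 ≤ r) (lam : Fin r → ℕ) (hlam : Antitone lam) (d e : ℕ) :
    wedge A (sbarMinus A d (sbarPlus A e (xlam A r lam))) (xg A 0) =
      wedge A (sbarPlus A e (sbarMinus A d (xlam A r lam))) (xg A 0) :=
  sbar_commute_against_x0_general A _ d e

end ExtSemi
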